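/- arXiv:1912.00275 — 10 statements merged into one kernel-verified Lean document; each statement's English description precedes it below -/
import Mathlib

section
/- Let S ⊆ Fin n be a nonempty set of vertices such that any two vertices of S are mutually reachable using only positive-weight edges between vertices of S (the induced subgraph on S is strongly connected), and suppose S is not isolated: there exist i ∈ S and j ∉ S with w i j > 0. Then the principal submatrix of the graph Laplacian L with rows and columns indexed by S is invertible; in particular, 0 is not an eigenvalue of this submatrix. -/
open Matrix Polynomial

/-- The graph Laplacian `L = D - A` of a weighted digraph with weight matrix `w`. -/
def graphLaplacian {n : ℕ} (w : Fin n → Fin n → ℝ) : Matrix (Fin n) (Fin n) ℝ :=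
  Matrix.diagonal (fun i => ∑ j, w i j) - Matrix.of w

/-- If the induced subgraph on a nonempty vertex set `S` is strongly connected and `S` is
not isolated, then the principal submatrix of the graph Laplacian indexed by `S` is
invertible; in particular, `0` is not an eigenvalue of this submatrix. -/
theorem submatrix_isUnit_of_strongly_connected_not_isolated (n : ℕ) (hn : 1 ≤ n)
    (w : Fin n → Fin n → ℝ) (hw : ∀ i j, 0 ≤ w i j) (hdiag : ∀ i, w i i = 0)
    (S : Finset (Fin n)) (hS : S.Nonempty)
    (hconn : ∀ i ∈ S, ∀ j ∈ S,
      Relation.ReflTransGen (fun a b => a ∈ S ∧ b ∈ S ∧ 0 < w a b) i j)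
    (hniso : ∃ i ∈ S, ∃ j, j ∉ S ∧ 0 < w i j) :
    IsUnit ((graphLaplacian w).submatrix
        (Subtype.val : {x // x ∈ S} → Fin n) (Subtype.val : {x // x ∈ S} → Fin n)) ∧
      ¬ ((graphLaplacian w).submatrix
        (Subtype.val : {x // x ∈ S} → Fin n)
        (Subtype.val : {x // x ∈ S} → Fin n)).charpoly.IsRoot 0 := by
  have hU : IsUnit ((graphLaplacian w).submatrix
        (Subtype.val : {x // x ∈ S} → Fin n) (Subtype.val : {x // x ∈ S} → Fin n)) := by
    rw [Matrix.isUnit_iff_isUnit_det, isUnit_iff_ne_zero]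
    intro hdet
    obtain ⟨v, hv0, hv⟩ := Matrix.exists_mulVec_eq_zero_iff.mpr hdet
    -- extend `v` by zero
    obtain ⟨u, hu⟩ : ∃ u : Fin n → ℝ, u = fun i => if h : i ∈ S then v ⟨i, h⟩ else 0 := ⟨_, rfl⟩
    have huS : ∀ x : {x // x ∈ S}, u x.1 = v x := by
      intro x
      simp [hu]
    have hout : ∀ j, j ∉ S → u j = 0 := by
      intro j hj
      simp [hu, hj]
    have heq : ∀ i ∈ S, (∑ j, w i j) * u i = ∑ j, w i j * u j := by
      intro i hi
      have h1 := congrFun hv ⟨i, hi⟩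
      have h2 : ∑ j, graphLaplacian w i j * u j = 0 := by
        rw [← Finset.sum_subset (Finset.subset_univ S)
          (fun j _ hj => by rw [hout j hj, mul_zero]), ← Finset.sum_coe_sort]
        simpa [Matrix.mulVec, dotProduct, huS] using h1
      simp only [graphLaplacian, Matrix.sub_apply, Matrix.of_apply, Matrix.diagonal_apply,
        sub_mul, Finset.sum_sub_distrib, ite_mul, zero_mul, Finset.sum_ite_eq,
        Finset.mem_univ, if_true] at h2
      linarith
    obtain ⟨m, hmS, hm⟩ := S.exists_max_image (fun i => |u i|) hS
    have hle : ∀ j, |u j| ≤ |u m| := by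
      intro j
      by_cases hj : j ∈ S
      · exact hm j hj
      · rw [hout j hj, abs_zero]
        exact abs_nonneg _
    have hstep : ∀ i ∈ S, |u i| = |u m| → ∀ j, 0 < w i j → |u j| = |u m| := by
      intro i hi him j hij
      have h1 : (∑ j, w i j) * |u m| ≤ ∑ j, w i j * |u j| := by
        rw [← him, ← abs_of_nonneg (Finset.sum_nonneg fun j _ => hw i j), ← abs_mul, heq i hi]
        refine (Finset.abs_sum_le_sum_abs _ _).trans (le_of_eq ?_)
        exact Finset.sum_congr rfl fun j _ => by rw [abs_mul, abs_of_nonneg (hw i j)]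
      have h2 : w i j * (|u m| - |u j|) ≤ ∑ j, w i j * (|u m| - |u j|) :=
        Finset.single_le_sum (f := fun j => w i j * (|u m| - |u j|))
          (fun k _ => mul_nonneg (hw i k) (sub_nonneg.mpr (hle k))) (Finset.mem_univ j)
      have h3 : ∑ j, w i j * (|u m| - |u j|) ≤ 0 := by
        simp only [mul_sub, Finset.sum_sub_distrib, ← Finset.sum_mul]
        linarith
      have h4 : |u m| - |u j| ≤ 0 := by
        by_contra hc
        have := mul_pos hij (not_le.mp hc)
        linarith
      exact le_antisymm (hle j) (by linarith)
    have hall : ∀ i ∈ S, |u i| = |u m| := by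
      intro i hi
      have h := hconn m hmS i hi
      induction h with
      | refl => rfl
      | tail _ hbc ih => exact hstep _ hbc.1 (ih hbc.1) _ hbc.2.2
    obtain ⟨i, hi, j, hj, hij⟩ := hniso
    have hz := hstep i hi (hall i hi) j hij
    rw [hout j hj, abs_zero] at hz
    apply hv0
    funext x
    have := hall x.1 x.2
    rw [← hz, abs_eq_zero, huS] at this
    exact this
  refine ⟨hU, fun h => ?_⟩
  rw [← Matrix.mem_spectrum_iff_isRoot_charpoly] at h
  exact (spectrum.zero_notMem_iff ℝ).mpr hU h
end

section
/- Suppose a weighted digraph on n ≥ 1 vertices is strongly connected: any two vertices are mutually reachable through positive-weight edges. Then 0 is a simple eigenvalue of its graph Laplacian L, i.e., the root multiplicity of 0 in the characteristic polynomial of L equals 1. -/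
open Matrix Polynomial

theorem graphLaplacian_apply_vec {n : ℕ} (w : Fin n → Fin n → ℝ) (v : Fin n → ℝ) (i : Fin n) :
    (graphLaplacian w *ᵥ v) i = ∑ j, w i j * (v i - v j) := by
  simp only [graphLaplacian, Matrix.sub_mulVec, Pi.sub_apply, Matrix.mulVec_diagonal, mul_sub,
    Finset.sum_sub_distrib, Finset.sum_mul]
  rfl

theorem const_of_laplacian_const {n : ℕ} (w : Fin n → Fin n → ℝ) (hw : ∀ i j, 0 ≤ w i j)
    (hconn : ∀ i j : Fin n, Relation.ReflTransGen (fun a b => 0 < w a b) i j)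
    (v : Fin n → ℝ) (c : ℝ) (h : ∀ i, (graphLaplacian w *ᵥ v) i = c) (i j : Fin n) :
    v i = v j := by
  haveI : Nonempty (Fin n) := ⟨i⟩
  obtain ⟨M, hM⟩ := Finite.exists_max v
  obtain ⟨m, hm⟩ := Finite.exists_min v
  have hc : c ≤ 0 := by
    rw [← h m, graphLaplacian_apply_vec]
    exact Finset.sum_nonpos fun j _ =>
      mul_nonpos_of_nonneg_of_nonpos (hw m j) (sub_nonpos.2 (hm j))
  have key : ∀ k, v k = v M := by
    intro k
    induction hconn M k with
    | refl => rfl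
    | @tail a b _ hab ih =>
      have hnn : ∀ j ∈ Finset.univ, 0 ≤ w a j * (v a - v j) := fun j _ =>
        mul_nonneg (hw a j) (sub_nonneg.2 (ih ▸ hM j))
      have h1 := Finset.single_le_sum hnn (Finset.mem_univ b)
      rw [← graphLaplacian_apply_vec, h a] at h1
      have h2 : v a - v b ≤ 0 := by
        by_contra hlt
        have := mul_pos hab (not_le.1 hlt)
        linarith
      have := hM b
      linarith
  rw [key i, key j]

theorem laplacian_mul_const {n : ℕ} (w : Fin n → Fin n → ℝ) (v : Fin n → ℝ)
    (h : ∀ i j, v i = v j) : graphLaplacian w *ᵥ v = 0 := by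
  funext i
  rw [graphLaplacian_apply_vec]
  exact Finset.sum_eq_zero fun j _ => by rw [h i j, sub_self, mul_zero]

theorem const_of_pow {n : ℕ} (w : Fin n → Fin n → ℝ) (hw : ∀ i j, 0 ≤ w i j)
    (hconn : ∀ i j : Fin n, Relation.ReflTransGen (fun a b => 0 < w a b) i j) (k : ℕ) :
    ∀ v : Fin n → ℝ, ((Matrix.toLin' (graphLaplacian w)) ^ k) v = 0 → ∀ i j, v i = v j := by
  induction k with
  | zero => intro v hv i j; simp at hv; simp [hv]
  | succ k ih =>
    intro v hv i j
    rw [pow_succ, Module.End.mul_apply, Matrix.toLin'_apply] at hv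
    have := ih _ hv
    exact const_of_laplacian_const w hw hconn v _ (fun a => this a i) i j

/-- If the weighted digraph is strongly connected, then `0` is a simple eigenvalue of its
graph Laplacian: the root multiplicity of `0` in the characteristic polynomial is `1`. -/
theorem zero_simple_eigenvalue_of_strongly_connected (n : ℕ) (hn : 1 ≤ n)
    (w : Fin n → Fin n → ℝ) (hw : ∀ i j, 0 ≤ w i j) (hdiag : ∀ i, w i i = 0)
    (hconn : ∀ i j : Fin n, Relation.ReflTransGen (fun a b => 0 < w a b) i j) :
    (graphLaplacian w).charpoly.rootMultiplicity 0 = 1 := by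
  rw [← Matrix.charpoly_toLin', ← LinearMap.finrank_maxGenEigenspace_eq]
  have i0 : Fin n := ⟨0, hn⟩
  refine finrank_eq_one_iff'.2 ⟨⟨fun _ => 1, ?_⟩, ?_, ?_⟩
  · rw [Module.End.mem_maxGenEigenspace]
    refine ⟨1, ?_⟩
    rw [zero_smul, sub_zero, pow_one, Matrix.toLin'_apply]
    exact laplacian_mul_const w _ fun _ _ => rfl
  · intro h
    have := congrFun (congrArg Subtype.val h) i0
    simp at this
  · rintro ⟨v, hv⟩
    obtain ⟨k, hk⟩ := (Module.End.mem_maxGenEigenspace _ _ _).1 hv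
    rw [zero_smul, sub_zero] at hk
    refine ⟨v i0, Subtype.ext (funext fun i => ?_)⟩
    simpa using const_of_pow w hw hconn k v hk i0 i
end

section
/- For every weighted digraph on n ≥ 1 vertices with graph Laplacian L, the algebraic multiplicity of the eigenvalue 0 equals its geometric multiplicity: the root multiplicity of 0 in the characteristic polynomial of L equals the dimension (finrank over ℝ) of the kernel of the linear map x ↦ L *ᵥ x. -/
open Matrix Polynomial

lemma lap_mulVec {n : ℕ} (w : Fin n → Fin n → ℝ) (x : Fin n → ℝ) (i : Fin n) :
    (graphLaplacian w *ᵥ x) i = ∑ j, w i j * (x i - x j) := by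
  simp only [graphLaplacian, Matrix.sub_mulVec, Pi.sub_apply, Matrix.mulVec_diagonal,
    mul_sub, Finset.sum_sub_distrib, Finset.sum_mul]
  rfl

/-- Minimum principle argument: if `L (L x) = 0` then `L x ≤ 0`. -/
lemma lap_aux {n : ℕ} (w : Fin n → Fin n → ℝ) (hw : ∀ i j, 0 ≤ w i j) (x : Fin n → ℝ)
    (h : graphLaplacian w *ᵥ (graphLaplacian w *ᵥ x) = 0) (p : Fin n) :
    (graphLaplacian w *ᵥ x) p ≤ 0 := by
  by_contra! hp
  set y := graphLaplacian w *ᵥ x with hy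
  let M := ∑ j, |x j|
  have hM : ∀ j, |x j| ≤ M := fun j =>
    Finset.single_le_sum (f := fun j => |x j|) (fun _ _ => abs_nonneg _) (Finset.mem_univ j)
  have hM0 : 0 ≤ M := (abs_nonneg _).trans (hM p)
  let s : ℝ := (2 * M + 1) / y p
  have hs : 0 ≤ s := by positivity
  have hsp : s * y p = 2 * M + 1 := by simp only [s]; field_simp
  have : Nonempty (Fin n) := ⟨p⟩
  obtain ⟨i, hi⟩ := Finite.exists_min (x - s • y)
  have e : graphLaplacian w *ᵥ (x - s • y) = y := by
    rw [Matrix.mulVec_sub, Matrix.mulVec_smul, h, smul_zero, sub_zero]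
  have hyi : y i ≤ 0 := by
    rw [← e, lap_mulVec]
    exact Finset.sum_nonpos fun j _ =>
      mul_nonpos_of_nonneg_of_nonpos (hw i j) (sub_nonpos.2 (hi j))
  have h1 := hi p
  simp only [Pi.sub_apply, Pi.smul_apply, smul_eq_mul, hsp] at h1
  have h2 := mul_nonpos_of_nonneg_of_nonpos hs hyi
  have h3 := abs_le.1 (hM i)
  have h4 := abs_le.1 (hM p)
  linarith

lemma lap_sq {n : ℕ} (w : Fin n → Fin n → ℝ) (hw : ∀ i j, 0 ≤ w i j) (x : Fin n → ℝ)
    (h : graphLaplacian w *ᵥ (graphLaplacian w *ᵥ x) = 0) :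
    graphLaplacian w *ᵥ x = 0 := by
  funext p
  have h1 := lap_aux w hw x h p
  have h2 := lap_aux w hw (-x) (by simp [Matrix.mulVec_neg, h]) p
  simp only [Matrix.mulVec_neg, Pi.neg_apply] at h2
  simp only [Pi.zero_apply]
  linarith

/-- For the graph Laplacian of a weighted digraph, the algebraic multiplicity of the
eigenvalue `0` equals its geometric multiplicity. -/
theorem algebraic_eq_geometric_multiplicity_zero (n : ℕ) (hn : 1 ≤ n)
    (w : Fin n → Fin n → ℝ) (hw : ∀ i j, 0 ≤ w i j) (hdiag : ∀ i, w i i = 0) :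
    (graphLaplacian w).charpoly.rootMultiplicity 0
      = Module.finrank ℝ (LinearMap.ker (graphLaplacian w).mulVecLin) := by
  have hc : (graphLaplacian w).mulVecLin.charpoly = (graphLaplacian w).charpoly :=
    Matrix.charpoly_toLin' _
  rw [← hc, ← LinearMap.finrank_maxGenEigenspace_eq]
  have hk : Module.End.maxGenEigenspace (graphLaplacian w).mulVecLin 0
      = LinearMap.ker (graphLaplacian w).mulVecLin := by
    ext x
    rw [Module.End.mem_maxGenEigenspace, zero_smul, sub_zero, LinearMap.mem_ker]
    constructor
    · rintro ⟨k, hk⟩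
      induction k generalizing x with
      | zero =>
        have : x = 0 := by simpa using hk
        simp [this]
      | succ k ih =>
        rw [pow_succ, Module.End.mul_apply] at hk
        exact lap_sq w hw x (ih _ hk)
    · intro hx
      exact ⟨1, by simpa using hx⟩
  rw [hk]
end

section
/- For every weighted digraph on n ≥ 1 vertices with graph Laplacian L, the dimension (finrank over ℝ) of the kernel of the linear map x ↦ L *ᵥ x equals the number of isolated strongly connected components of the digraph: the number of equivalence classes C of the mutual-reachability equivalence relation on Fin n such that w i j = 0 for all i ∈ C and all j ∉ C. -/
open Matrix Polynomial

/-- Vertex `j` is reachable from vertex `i` through positive-weight edges. -/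
def reaches {n : ℕ} (w : Fin n → Fin n → ℝ) : Fin n → Fin n → Prop :=
  Relation.ReflTransGen (fun a b => 0 < w a b)


lemma lap_apply {n : ℕ} (w : Fin n → Fin n → ℝ) (x : Fin n → ℝ) (i : Fin n) :
    (graphLaplacian w).mulVecLin x i = ∑ j, w i j * (x i - x j) := by
  simp only [graphLaplacian, Matrix.mulVecLin_apply, Matrix.sub_mulVec, Pi.sub_apply,
    Matrix.mulVec_diagonal, mul_sub, Finset.sum_sub_distrib, Finset.sum_mul]
  rfl

lemma max_principle {n : ℕ} (w : Fin n → Fin n → ℝ) (hw : ∀ i j, 0 ≤ w i j)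
    (B : Set (Fin n)) (hB : ∀ i, ∃ j ∈ B, reaches w i j) (x : Fin n → ℝ)
    (h1 : ∀ i ∈ B, x i = 0) (h2 : ∀ i, i ∉ B → (graphLaplacian w).mulVecLin x i = 0)
    (k : Fin n) : x k ≤ 0 := by
  have : Nonempty (Fin n) := ⟨k⟩
  obtain ⟨i, hi⟩ := Finite.exists_max x
  by_contra hk
  have hpos : 0 < x i := lt_of_lt_of_le (not_le.mp hk) (hi k)
  have key : ∀ j, reaches w i j → x j = x i := by
    intro j hj
    unfold reaches at hj
    induction hj with
    | refl => rfl
    | @tail a b _ hab ih =>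
      have ha : a ∉ B := fun ha => by
        have := h1 a ha
        linarith
      have h := h2 a ha
      rw [lap_apply, Finset.sum_eq_zero_iff_of_nonneg] at h
      · have h3 := h b (Finset.mem_univ b)
        rcases mul_eq_zero.mp h3 with h4 | h4
        · linarith
        · linarith
      · intro j _
        refine mul_nonneg (hw a j) ?_
        have := hi j
        linarith
  obtain ⟨j, hj, hij⟩ := hB i
  have e1 := key j hij
  have e2 := h1 j hj
  linarith

lemma max_principle_zero {n : ℕ} (w : Fin n → Fin n → ℝ) (hw : ∀ i j, 0 ≤ w i j)
    (B : Set (Fin n)) (hB : ∀ i, ∃ j ∈ B, reaches w i j) (x : Fin n → ℝ)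
    (h1 : ∀ i ∈ B, x i = 0) (h2 : ∀ i, i ∉ B → (graphLaplacian w).mulVecLin x i = 0) :
    x = 0 := by
  funext k
  apply le_antisymm
  · exact max_principle w hw B hB x h1 h2 k
  · have := max_principle w hw B hB (-x) (fun i hi => by simp [h1 i hi])
      (fun i hi => by rw [map_neg, Pi.neg_apply, h2 i hi, neg_zero]) k
    simpa using this

/-- A vertex is terminal if everything it reaches, reaches it back. -/
def terminal {n : ℕ} (w : Fin n → Fin n → ℝ) : Set (Fin n) :=
  {i | ∀ j, reaches w i j → reaches w j i}

lemma reaches_terminal {n : ℕ} (w : Fin n → Fin n → ℝ) (i : Fin n) :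
    ∃ j ∈ terminal w, reaches w i j := by
  have : Nonempty {j // reaches w i j} := ⟨⟨i, Relation.ReflTransGen.refl⟩⟩
  obtain ⟨⟨j, hj⟩, hmin⟩ :=
    Finite.exists_min (fun j : {j // reaches w i j} => {k | reaches w j.1 k}.ncard)
  refine ⟨j, ?_, hj⟩
  intro k hk
  have h := hmin ⟨k, Relation.ReflTransGen.trans hj hk⟩
  have hsub : {l | reaches w k l} ⊆ {l | reaches w j l} :=
    fun l hl => Relation.ReflTransGen.trans hk hl
  have heq := Set.eq_of_subset_of_ncard_le hsub h (Set.toFinite _)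
  have : j ∈ {l | reaches w j l} := Relation.ReflTransGen.refl
  rw [← heq] at this
  exact this

/-- The strongly connected component of a vertex. -/
def scc {n : ℕ} (w : Fin n → Fin n → ℝ) (v : Fin n) : Set (Fin n) :=
  {u | reaches w v u ∧ reaches w u v}

lemma scc_eq {n : ℕ} (w : Fin n → Fin n → ℝ) {u v : Fin n} (h1 : reaches w u v)
    (h2 : reaches w v u) : scc w u = scc w v := by
  ext k
  exact ⟨fun h => ⟨Relation.ReflTransGen.trans h2 h.1, Relation.ReflTransGen.trans h.2 h1⟩,
    fun h => ⟨Relation.ReflTransGen.trans h1 h.1, Relation.ReflTransGen.trans h.2 h2⟩⟩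

/-- The isolated components. -/
def isoSet {n : ℕ} (w : Fin n → Fin n → ℝ) : Set (Set (Fin n)) :=
  {C : Set (Fin n) |
          (∃ v, C = {u | reaches w v u ∧ reaches w u v}) ∧
          ∀ i ∈ C, ∀ j ∉ C, w i j = 0}

lemma scc_mem {n : ℕ} (w : Fin n → Fin n → ℝ) (hw : ∀ i j, 0 ≤ w i j) {v : Fin n}
    (hv : v ∈ terminal w) : scc w v ∈ isoSet w := by
  refine ⟨⟨v, rfl⟩, ?_⟩
  intro i hi j hj
  by_contra h
  have hpos : 0 < w i j := lt_of_le_of_ne (hw i j) (Ne.symm h)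
  have hvj : reaches w v j := Relation.ReflTransGen.tail hi.1 hpos
  exact hj ⟨hvj, hv j hvj⟩

lemma terminal_of_scc_mem {n : ℕ} (w : Fin n → Fin n → ℝ) {v : Fin n}
    (hv : scc w v ∈ isoSet w) : v ∈ terminal w := by
  intro j hj
  have : j ∈ scc w v := by
    unfold reaches at hj
    induction hj with
    | refl => exact ⟨Relation.ReflTransGen.refl, Relation.ReflTransGen.refl⟩
    | @tail a b _ hab ih =>
      by_contra hb
      have := hv.2 a ih b hb
      linarith
  exact this.2

/-- The Dirichlet problem with boundary the terminal vertices. -/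
lemma dirichlet {n : ℕ} (w : Fin n → Fin n → ℝ) (hw : ∀ i j, 0 ≤ w i j) (g : Fin n → ℝ) :
    ∃ x : Fin n → ℝ, (∀ i ∈ terminal w, x i = g i) ∧
      ∀ i, i ∉ terminal w → (graphLaplacian w).mulVecLin x i = 0 := by
  classical
  let T : (Fin n → ℝ) →ₗ[ℝ] (Fin n → ℝ) := LinearMap.pi fun i =>
    if i ∈ terminal w then LinearMap.proj i
    else (LinearMap.proj i).comp (graphLaplacian w).mulVecLin
  have T1 : ∀ x, ∀ i ∈ terminal w, T x i = x i := fun x i hi => by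
    simp only [T, LinearMap.pi_apply, if_pos hi, LinearMap.proj_apply]
  have T2 : ∀ x, ∀ i, i ∉ terminal w → T x i = (graphLaplacian w).mulVecLin x i :=
    fun x i hi => by
      simp only [T, LinearMap.pi_apply, if_neg hi, LinearMap.comp_apply, LinearMap.proj_apply]
  have hinj : Function.Injective T := by
    rw [injective_iff_map_eq_zero]
    intro x hx
    refine max_principle_zero w hw (terminal w) (reaches_terminal w) x ?_ ?_
    · intro i hi
      rw [← T1 x i hi, hx]; rfl
    · intro i hi
      rw [← T2 x i hi, hx]; rfl
  obtain ⟨x, hx⟩ := (LinearMap.injective_iff_surjective.mp hinj)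
    (fun i => if i ∈ terminal w then g i else 0)
  refine ⟨x, fun i hi => ?_, fun i hi => ?_⟩
  · rw [← T1 x i hi, hx]; exact if_pos hi
  · rw [← T2 x i hi, hx]; exact if_neg hi

/-- The dimension of the kernel of the graph Laplacian equals the number of isolated
strongly connected components of the digraph. -/
theorem finrank_ker_eq_card_isolated_components (n : ℕ) (hn : 1 ≤ n)
    (w : Fin n → Fin n → ℝ) (hw : ∀ i j, 0 ≤ w i j) (hdiag : ∀ i, w i i = 0) :
    Module.finrank ℝ (LinearMap.ker (graphLaplacian w).mulVecLin)
      = {C : Set (Fin n) |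
          (∃ v, C = {u | reaches w v u ∧ reaches w u v}) ∧
          ∀ i ∈ C, ∀ j ∉ C, w i j = 0}.ncard := by
  classical
  change _ = (isoSet w).ncard
  choose r hr using fun C : isoSet w => C.2.1
  have hr' : ∀ C : isoSet w, C.1 = scc w (r C) := hr
  have hrt : ∀ C : isoSet w, r C ∈ terminal w := fun C =>
    terminal_of_scc_mem w (by rw [← hr' C]; exact C.2)
  let Φ : LinearMap.ker (graphLaplacian w).mulVecLin →ₗ[ℝ] (isoSet w → ℝ) :=
    (LinearMap.funLeft ℝ ℝ r).comp (Submodule.subtype _)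
  have hΦ : ∀ x C, Φ x C = x.1 (r C) := fun x C => rfl
  have hinj : Function.Injective Φ := by
    rw [injective_iff_map_eq_zero]
    intro x hx
    apply Subtype.ext
    refine max_principle_zero w hw (Set.range r) ?_ x.1 ?_ ?_
    · intro i
      obtain ⟨j, hj, hij⟩ := reaches_terminal w i
      refine ⟨r ⟨scc w j, scc_mem w hw hj⟩, ⟨_, rfl⟩, ?_⟩
      have h : r ⟨scc w j, scc_mem w hw hj⟩ ∈ scc w j := by
        have h := hr' ⟨scc w j, scc_mem w hw hj⟩
        change scc w j = _ at h
        have h0 : ∀ v, v ∈ scc w v :=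
          fun v => ⟨Relation.ReflTransGen.refl, Relation.ReflTransGen.refl⟩
        exact (Set.ext_iff.mp h _).mpr (h0 _)
      exact Relation.ReflTransGen.trans hij h.1
    · rintro _ ⟨C, rfl⟩
      rw [← hΦ, hx]; rfl
    · intro i _
      rw [LinearMap.mem_ker.mp x.2]; rfl
  have hsurj : Function.Surjective Φ := by
    intro f
    obtain ⟨x, hx1, hx2⟩ := dirichlet w hw
      (fun i => if h : scc w i ∈ isoSet w then f ⟨scc w i, h⟩ else 0)
    refine ⟨⟨x, ?_⟩, ?_⟩
    · rw [LinearMap.mem_ker]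
      funext i
      by_cases hi : i ∈ terminal w
      · rw [lap_apply]
        refine Finset.sum_eq_zero fun j _ => ?_
        by_cases hij : w i j = 0
        · rw [hij, zero_mul]
        · have hpos : 0 < w i j := lt_of_le_of_ne (hw i j) (Ne.symm hij)
          have h1 : reaches w i j := Relation.ReflTransGen.single hpos
          have h2 := hi j h1
          have hj : j ∈ terminal w := fun k hk =>
            Relation.ReflTransGen.trans (hi k (Relation.ReflTransGen.trans h1 hk)) h1
          rw [hx1 i hi, hx1 j hj]
          simp only [scc_eq w h1 h2, sub_self, mul_zero]
      · exact hx2 i hi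
    · funext C
      rw [hΦ]
      change x (r C) = _
      rw [hx1 _ (hrt C), dif_pos (scc_mem w hw (hrt C))]
      congr 1
      exact Subtype.ext (hr' C).symm
  rw [(LinearEquiv.ofBijective Φ ⟨hinj, hsurj⟩).finrank_eq, Module.finrank_fintype_fun_eq_card,
    ← Nat.card_eq_fintype_card]
  rfl
end

section
/- For a weighted digraph on n ≥ 1 vertices with graph Laplacian L, the characteristic polynomial of L equals ∏_{i : Fin n} (X − C(d⁺(i))) if and only if the digraph is acyclic. (Equivalently: the multiset of eigenvalues of L, with multiplicity, equals the multiset of out-degrees {d⁺(1), …, d⁺(n)} if and only if the digraph is acyclic.) -/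
open Matrix Polynomial

/-- The weighted digraph is acyclic: there is no directed cycle. -/
def IsAcyclic {n : ℕ} (w : Fin n → Fin n → ℝ) : Prop :=
  ¬ ∃ (k : ℕ) (x : ℕ → Fin n), 1 ≤ k ∧ x k = x 0 ∧ ∀ t < k, 0 < w (x t) (x (t + 1))

lemma det_aeval_congr {m : Type*} [Fintype m] [DecidableEq m] {K : Type*} [Field K] [IsAlgClosed K]
    (M N : Matrix m m K) (h : M.charpoly = N.charpoly) (p : K[X]) :
    (aeval M p).det = (aeval N p).det := by
  have key : ∀ s : Multiset K, (aeval M (s.map (fun a => X - C a)).prod).det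
      = (aeval N (s.map (fun a => X - C a)).prod).det := by
    intro s
    induction s using Multiset.induction_on with
    | empty => simp
    | cons a s ih =>
      have aux : ∀ M : Matrix m m K, (aeval M (X - C a)).det
          = (-1) ^ Fintype.card m * M.charpoly.eval a := by
        intro M
        rw [Matrix.eval_charpoly, ← Matrix.det_neg]
        congr 1
        simp [Matrix.algebraMap_eq_diagonal, Matrix.scalar_apply, Pi.algebraMap_def]
      simp only [Multiset.map_cons, Multiset.prod_cons, map_mul, Matrix.det_mul, ih, aux, h]
  have hp := (IsAlgClosed.splits p).eq_prod_roots
  rw [hp]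
  simp only [map_mul, Matrix.det_mul, key, aeval_C, Matrix.algebraMap_eq_diagonal]

lemma det_aeval_congr_real {m : Type*} [Fintype m] [DecidableEq m]
    (M N : Matrix m m ℝ) (h : M.charpoly = N.charpoly) (p : ℝ[X]) :
    (aeval M p).det = (aeval N p).det := by
  have h1 : (M.map (algebraMap ℝ ℂ)).charpoly = (N.map (algebraMap ℝ ℂ)).charpoly := by
    rw [Matrix.charpoly_map, Matrix.charpoly_map, h]
  have h2 := det_aeval_congr _ _ h1 (p.map (algebraMap ℝ ℂ))
  have h3 : ∀ M : Matrix m m ℝ, (aeval (M.map (algebraMap ℝ ℂ)) (p.map (algebraMap ℝ ℂ))).det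
      = algebraMap ℝ ℂ (aeval M p).det := by
    intro M
    rw [RingHom.map_det]
    congr 1
    have := Polynomial.map_aeval_eq_aeval_map (φ := algebraMap ℝ ℂ)
      (ψ := (algebraMap ℝ ℂ).mapMatrix (m := m)) (by
        ext r i j
        by_cases hij : i = j <;> simp [Matrix.algebraMap_matrix_apply, hij]) p M
    rw [this]
    rfl
  rw [h3, h3] at h2
  exact (algebraMap ℝ ℂ).injective h2

lemma trace_aeval_congr_real {m : Type*} [Fintype m] [DecidableEq m] [Nonempty m]
    (M N : Matrix m m ℝ) (h : M.charpoly = N.charpoly) (p : ℝ[X]) :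
    (aeval M p).trace = (aeval N p).trace := by
  have : (aeval M p).charpoly = (aeval N p).charpoly := by
    apply Polynomial.funext
    intro t
    have := det_aeval_congr_real M N h (C t - p)
    rw [Matrix.eval_charpoly, Matrix.eval_charpoly]
    simpa [Matrix.algebraMap_eq_diagonal, Matrix.scalar_apply, Pi.algebraMap_def] using this
  rw [Matrix.trace_eq_neg_charpoly_nextCoeff, Matrix.trace_eq_neg_charpoly_nextCoeff, this]

lemma pow_entry_bound {m : Type*} [Fintype m] [DecidableEq m] (A : Matrix m m ℝ) (e : m → ℝ)
    (hA : ∀ i j, 0 ≤ A i j) (he : ∀ i, 0 ≤ e i) (k : ℕ) :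
    (∀ i j, 0 ≤ (A ^ (k + 1)) i j) ∧ ∀ i j, (A ^ (k + 1)) i j + (diagonal e ^ (k + 1)) i j
      ≤ ((diagonal e + A) ^ (k + 1)) i j := by
  have hE : ∀ k i j, 0 ≤ (diagonal e ^ k) i j := by
    intro k i j
    rw [Matrix.diagonal_pow, Matrix.diagonal_apply]
    split_ifs
    · exact pow_nonneg (he i) k
    · exact le_rfl
  induction k with
  | zero =>
    simp only [zero_add, pow_one]
    exact ⟨hA, fun i j => by rw [Matrix.add_apply, add_comm]⟩
  | succ k ih =>
    obtain ⟨h0, h1⟩ := ih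
    refine ⟨fun i j => ?_, fun i j => ?_⟩
    · rw [pow_succ, Matrix.mul_apply]
      exact Finset.sum_nonneg fun l _ => mul_nonneg (h0 _ _) (hA _ _)
    · rw [pow_succ _ (k + 1), pow_succ _ (k + 1), pow_succ _ (k + 1), Matrix.mul_apply,
        Matrix.mul_apply, Matrix.mul_apply, ← Finset.sum_add_distrib]
      refine Finset.sum_le_sum fun l _ => ?_
      have a1 := h0 i l
      have a2 := hE (k + 1) i l
      have a3 := h1 i l
      have a4 := hA l j
      have a5 := hE 1 l j
      rw [pow_one] at a5
      rw [Matrix.add_apply]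
      calc _ ≤ ((A ^ (k + 1)) i l + (diagonal e ^ (k + 1)) i l) * (diagonal e l j + A l j) := by
            nlinarith [mul_nonneg a1 a5, mul_nonneg a2 a4]
        _ ≤ _ := mul_le_mul_of_nonneg_right a3 (by positivity)

lemma pow_walk_pos {m : Type*} [Fintype m] [DecidableEq m] (A : Matrix m m ℝ)
    (hA : ∀ i j, 0 ≤ A i j) (x : ℕ → m) (k : ℕ) (hx : ∀ t < k, 0 < A (x t) (x (t + 1))) :
    (∀ i j, 0 ≤ (A ^ k) i j) ∧ 0 < (A ^ k) (x 0) (x k) := by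
  induction k with
  | zero =>
    refine ⟨fun i j => ?_, by simp⟩
    rw [pow_zero, Matrix.one_apply]
    split_ifs <;> norm_num
  | succ k ih =>
    obtain ⟨h0, h1⟩ := ih fun t ht => hx t (by omega)
    refine ⟨fun i j => ?_, ?_⟩
    · rw [pow_succ, Matrix.mul_apply]
      exact Finset.sum_nonneg fun l _ => mul_nonneg (h0 _ _) (hA _ _)
    · rw [pow_succ, Matrix.mul_apply]
      exact Finset.sum_pos' (fun l _ => mul_nonneg (h0 _ _) (hA _ _))
        ⟨x k, Finset.mem_univ _, mul_pos h1 (hx k (by omega))⟩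

/-- The eigenvalues of the graph Laplacian (with multiplicity) are exactly the
out-degrees of the vertices if and only if the digraph is acyclic. -/
theorem charpoly_eq_prod_outDegrees_iff_acyclic (n : ℕ) (hn : 1 ≤ n)
    (w : Fin n → Fin n → ℝ) (hw : ∀ i j, 0 ≤ w i j) (hdiag : ∀ i, w i i = 0) :
    (graphLaplacian w).charpoly = ∏ i : Fin n, (X - C (∑ j, w i j)) ↔ IsAcyclic w := by
  have : Nonempty (Fin n) := ⟨⟨0, hn⟩⟩
  set d : Fin n → ℝ := fun i => ∑ j, w i j with hd
  constructor
  · rintro h ⟨k, x, hk, hxk, hx⟩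
    have hD : (graphLaplacian w).charpoly = (diagonal d).charpoly := by
      rw [h, Matrix.charpoly_diagonal]
    have hd0 : ∀ i, 0 ≤ d i := fun i => Finset.sum_nonneg fun j _ => hw i j
    set c : ℝ := ∑ i, d i
    have hc : ∀ i, 0 ≤ c - d i := fun i =>
      sub_nonneg.2 (Finset.single_le_sum (fun j _ => hd0 j) (Finset.mem_univ i))
    have ht := trace_aeval_congr_real _ _ hD ((C c - X) ^ k)
    have e1 : aeval (graphLaplacian w) (C c - X) = diagonal (fun i => c - d i) + Matrix.of w := by
      ext i j
      by_cases hij : i = j <;>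
      simp [graphLaplacian, hd, Matrix.algebraMap_matrix_apply, Matrix.diagonal_apply, hij, hdiag]
    have e2 : aeval (diagonal d) (C c - X) = diagonal (fun i => c - d i) := by
      ext i j
      by_cases hij : i = j <;>
      simp [Matrix.algebraMap_matrix_apply, Matrix.diagonal_apply, hij]
    rw [map_pow, map_pow, e1, e2] at ht
    obtain ⟨k, rfl⟩ : ∃ l, k = l + 1 := ⟨k - 1, by omega⟩
    obtain ⟨b0, b1⟩ := pow_entry_bound (Matrix.of w) (fun i => c - d i) hw hc k
    have b2 := (pow_walk_pos (Matrix.of w) hw x (k + 1) hx).2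
    rw [hxk] at b2
    refine absurd ht (ne_of_gt ?_)
    refine Finset.sum_lt_sum (fun i _ => ?_) ⟨x 0, Finset.mem_univ _, ?_⟩
    · have := b1 i i
      have := b0 i i
      simp only [Matrix.diag_apply]
      linarith
    · have := b1 (x 0) (x 0)
      simp only [Matrix.diag_apply]
      linarith
  · intro h
    rw [Matrix.charpoly, ← Matrix.det_transpose, Matrix.det_apply, Finset.sum_eq_single 1]
    · simp only [Equiv.Perm.sign_one, one_smul, Equiv.Perm.one_apply, Matrix.transpose_apply]
      refine Finset.prod_congr rfl fun i _ => ?_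
      simp [Matrix.charmatrix_apply_eq, graphLaplacian, hdiag]
    · intro σ _ hσ
      obtain ⟨a, ha⟩ : ∃ a, σ a ≠ a := by
        by_contra! hcon
        exact hσ (Equiv.ext hcon)
      have hex : ∃ t, ¬ 0 < w ((σ ^ t) a) ((σ ^ (t + 1)) a) := by
        by_contra! hcon
        exact h ⟨orderOf σ, fun t => (σ ^ t) a, orderOf_pos σ, by simp [pow_orderOf_eq_one],
          fun t _ => hcon t⟩
      obtain ⟨t, ht⟩ := hex
      have hne : σ ((σ ^ t) a) ≠ (σ ^ t) a := by
        rw [← Equiv.Perm.mul_apply, ← pow_succ', pow_succ, Equiv.Perm.mul_apply]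
        exact fun hh => ha ((σ ^ t).injective hh)
      rw [pow_succ', Equiv.Perm.mul_apply] at ht
      have h0 : w ((σ ^ t) a) (σ ((σ ^ t) a)) = 0 := le_antisymm (not_lt.1 ht) (hw _ _)
      rw [Finset.prod_eq_zero (Finset.mem_univ ((σ ^ t) a)), smul_zero]
      rw [Matrix.transpose_apply, Matrix.charmatrix_apply_ne _ _ _ hne.symm]
      simp [graphLaplacian, h0, Matrix.diagonal_apply_ne _ hne.symm]
    · simp
end

section
/- Let a weighted digraph on n ≥ 1 vertices have all weights satisfying 0 ≤ w i j ≤ 1, with graph Laplacian L. Then the digraph is a complete dominance graph if and only if both: (a) the characteristic polynomial of L equals ∏_{k=0}^{n−1} (X − C(k)), and (b) there exists a permutation σ : Fin n ≃ Fin n with d⁺(σ k) = n − 1 − k for every k. (That is, the eigenvalues of L equal the out-degrees of the vertices and these are exactly n−1, n−2, …, 1, 0.) -/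
open Matrix Polynomial

/-- A complete dominance graph: all weights are 0 or 1, for each pair of distinct
vertices exactly one of the two opposite edges has weight 1, and the digraph is
acyclic (an acyclic tournament with unit weights). -/
def IsCompleteDominanceGraph {n : ℕ} (w : Fin n → Fin n → ℝ) : Prop :=
  (∀ i j, w i j = 0 ∨ w i j = 1) ∧
  (∀ i j : Fin n, i ≠ j → Xor' (w i j = 1) (w j i = 1)) ∧
  IsAcyclic w

theorem charpoly_sq_eval {n : ℕ} (M : Matrix (Fin n) (Fin n) ℝ) (t : ℝ) :
    (M ^ 2).charpoly.eval (t ^ 2) =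
      M.charpoly.eval t * ((-1) ^ n * M.charpoly.eval (-t)) := by
  rw [Matrix.eval_charpoly, Matrix.eval_charpoly, Matrix.eval_charpoly]
  have h1 : ((-1 : ℝ) ^ n) * (Matrix.scalar (Fin n) (-t) - M).det
      = (Matrix.scalar (Fin n) t + M).det := by
    have := Matrix.det_neg (Matrix.scalar (Fin n) (-t) - M)
    rw [Fintype.card_fin] at this
    rw [← this]
    congr 1
    rw [map_neg]
    abel
  rw [h1, ← Matrix.det_mul]
  congr 1
  have hc : Commute (Matrix.scalar (Fin n) t) M :=
    Matrix.scalar_commute t (fun r => Commute.all _ _) M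
  rw [map_pow, hc.sq_sub_sq]
  have h2 : Commute (Matrix.scalar (Fin n) t + M) (Matrix.scalar (Fin n) t - M) :=
    ((Commute.refl _).sub_right hc).add_left (hc.symm.sub_right (Commute.refl _))
  exact h2.eq

theorem charpoly_sq_eq {n : ℕ} (M N : Matrix (Fin n) (Fin n) ℝ)
    (h : M.charpoly = N.charpoly) : (M ^ 2).charpoly = (N ^ 2).charpoly := by
  apply Polynomial.eq_of_infinite_eval_eq
  apply (Set.Ici_infinite (0 : ℝ)).mono
  intro x hx
  have hx' : (Real.sqrt x) ^ 2 = x := Real.sq_sqrt hx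
  show eval x _ = eval x _
  rw [← hx', charpoly_sq_eval, charpoly_sq_eval, h]

theorem trace_sq_eq {n : ℕ} (M N : Matrix (Fin n) (Fin n) ℝ) (hn : 1 ≤ n)
    (h : M.charpoly = N.charpoly) : (M ^ 2).trace = (N ^ 2).trace := by
  haveI : Nonempty (Fin n) := ⟨⟨0, hn⟩⟩
  rw [Matrix.trace_eq_neg_charpoly_nextCoeff, Matrix.trace_eq_neg_charpoly_nextCoeff,
    charpoly_sq_eq M N h]

theorem trace_sq_laplacian {n : ℕ} (w : Fin n → Fin n → ℝ) (hdiag : ∀ i, w i i = 0) :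
    ((graphLaplacian w) ^ 2).trace = ∑ i, (∑ j, w i j) ^ 2 + ∑ i, ∑ j, w i j * w j i := by
  have hA : (graphLaplacian w) ^ 2 =
      Matrix.diagonal (fun i => ∑ j, w i j) * Matrix.diagonal (fun i => ∑ j, w i j)
      - Matrix.diagonal (fun i => ∑ j, w i j) * Matrix.of w
      - Matrix.of w * Matrix.diagonal (fun i => ∑ j, w i j) + Matrix.of w * Matrix.of w := by
    unfold graphLaplacian
    noncomm_ring
  rw [hA, Matrix.trace_add, Matrix.trace_sub, Matrix.trace_sub]
  have h4 : (Matrix.of w * Matrix.of w).trace = ∑ i, ∑ j, w i j * w j i := by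
    simp [Matrix.trace, Matrix.mul_apply]
  rw [h4, Matrix.diagonal_mul_diagonal]
  simp [Matrix.trace, Matrix.diagonal_mul, Matrix.mul_diagonal, hdiag, sq]

theorem sum_ite_lt {n : ℕ} (i : Fin n) :
    ∑ j : Fin n, (if i < j then (1 : ℝ) else 0) = (n : ℝ) - 1 - (i : ℕ) := by
  rw [Finset.sum_boole]
  have : (Finset.univ.filter fun j : Fin n => i < j) = Finset.Ioi i := by
    ext; simp
  rw [this, Fin.card_Ioi, Nat.sub_sub, Nat.cast_sub (by have := i.2; omega)]
  push_cast
  ring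

theorem sum_rev {n : ℕ} (f : ℝ → ℝ) :
    ∑ k : Fin n, f ((n : ℝ) - 1 - (k : ℕ)) = ∑ k : Fin n, f ((k : ℕ) : ℝ) := by
  rw [← Equiv.sum_comp Fin.revPerm]
  apply Finset.sum_congr rfl
  intro k _
  congr 1
  rw [Fin.revPerm_apply, Fin.val_rev, Nat.cast_sub (by have := k.2; omega)]
  push_cast
  ring

theorem prod_rev {n : ℕ} (f : ℝ → ℝ[X]) :
    ∏ k : Fin n, f ((n : ℝ) - 1 - (k : ℕ)) = ∏ k : Fin n, f ((k : ℕ) : ℝ) := by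
  rw [← Equiv.prod_comp Fin.revPerm]
  apply Finset.prod_congr rfl
  intro k _
  congr 1
  rw [Fin.revPerm_apply, Fin.val_rev, Nat.cast_sub (by have := k.2; omega)]
  push_cast
  ring

theorem dominance_of_order {n : ℕ} (w : Fin n → Fin n → ℝ) (σ : Equiv.Perm (Fin n))
    (h : ∀ i j, w (σ i) (σ j) = if i < j then 1 else 0) : IsCompleteDominanceGraph w := by
  have h' : ∀ i j, w i j = if σ.symm i < σ.symm j then 1 else 0 := by
    intro i j
    rw [← h]; simp
  refine ⟨?_, ?_, ?_⟩
  · intro i j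
    rw [h']; split_ifs <;> simp
  · intro i j hij
    have hne : σ.symm i ≠ σ.symm j := fun e => hij (σ.symm.injective e)
    rw [h' i j, h' j i]
    rcases lt_or_gt_of_ne hne with hl | hl
    · simp [hl, hl.not_gt, Xor']
    · simp [hl, hl.not_gt, Xor']
  · rintro ⟨k, x, hk, hx, hpos⟩
    have key : ∀ t < k, σ.symm (x t) < σ.symm (x (t + 1)) := by
      intro t ht
      have := hpos t ht
      rw [h'] at this
      by_contra hc
      simp [hc] at this
    have key2 : ∀ t, t + 1 ≤ k → σ.symm (x 0) < σ.symm (x (t + 1)) := by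
      intro t
      induction t with
      | zero => intro ht; exact key 0 ht
      | succ t ih => intro ht; exact (ih (by omega)).trans (key _ ht)
    have := key2 (k - 1) (by omega)
    rw [Nat.sub_add_cancel hk, hx] at this
    exact lt_irrefl _ this

theorem order_of_dominance {n : ℕ} (w : Fin n → Fin n → ℝ) (hdiag : ∀ i, w i i = 0)
    (h : IsCompleteDominanceGraph w) :
    ∃ σ : Equiv.Perm (Fin n), ∀ i j, w (σ i) (σ j) = if i < j then 1 else 0 := by
  classical
  obtain ⟨h01, hx, hac⟩ := h
  have irr : ∀ i, w i i ≠ 1 := fun i => by rw [hdiag]; norm_num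
  have asym : ∀ i j, w i j = 1 → w j i ≠ 1 := by
    intro i j hij hji
    by_cases e : i = j
    · subst e; exact irr i hij
    · rcases hx i j e with ⟨_, b⟩ | ⟨_, b⟩
      · exact b hji
      · exact b hij
  have tr : ∀ i j k, w i j = 1 → w j k = 1 → w i k = 1 := by
    intro i j k hij hjk
    by_cases e : i = k
    · subst e; exact absurd hjk (asym _ _ hij)
    · rcases hx i k e with ⟨a, _⟩ | ⟨a, _⟩
      · exact a
      · exfalso
        apply hac
        refine ⟨3, fun t => if t % 3 = 0 then i else if t % 3 = 1 then j else k,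
          by norm_num, by simp, ?_⟩
        intro t ht
        interval_cases t
        · simp [hij]
        · simp [hjk]
        · simp [a]
  let f : Fin n → Fin n := fun i => ⟨(Finset.univ.filter fun j => w j i = 1).card, by
    have : (Finset.univ.filter fun j => w j i = 1) ⊂ Finset.univ := by
      rw [Finset.ssubset_univ_iff]
      intro e
      have : i ∈ (Finset.univ.filter fun j => w j i = 1) := by rw [e]; simp
      exact irr i (by simpa using this)
    simpa using Finset.card_lt_card this⟩
  have mono : ∀ i j, w i j = 1 → f i < f j := by
    intro i j hij
    rw [Fin.lt_def]
    show (Finset.univ.filter fun k => w k i = 1).card <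
      (Finset.univ.filter fun k => w k j = 1).card
    apply Finset.card_lt_card
    rw [Finset.ssubset_iff_of_subset]
    · exact ⟨i, by simpa using hij, by simpa using irr i⟩
    · intro k hk
      simp only [Finset.mem_filter, Finset.mem_univ, true_and] at hk ⊢
      exact tr _ _ _ hk hij
  have inj : Function.Injective f := by
    intro i j hij
    by_contra e
    rcases hx i j e with ⟨a, _⟩ | ⟨a, _⟩
    · exact absurd hij (mono _ _ a).ne
    · exact absurd hij (mono _ _ a).ne'
  let e : Equiv.Perm (Fin n) := Equiv.ofBijective f (Finite.injective_iff_bijective.mp inj)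
  have he : ∀ i, f (e.symm i) = i := fun i => e.apply_symm_apply i
  refine ⟨e.symm, fun i j => ?_⟩
  split_ifs with hlt
  · by_contra hc
    have hne : e.symm i ≠ e.symm j := fun q => hlt.ne (e.symm.injective q)
    rcases hx _ _ hne with ⟨a, _⟩ | ⟨a, _⟩
    · exact hc a
    · have := mono _ _ a
      rw [he, he] at this
      exact lt_asymm hlt this
  · rcases h01 (e.symm i) (e.symm j) with a | a
    · exact a
    · have := mono _ _ a
      rw [he, he] at this
      exact absurd this hlt

theorem charpoly_of_order {n : ℕ} (w : Fin n → Fin n → ℝ) (σ : Equiv.Perm (Fin n))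
    (h : ∀ i j, w (σ i) (σ j) = if i < j then 1 else 0)
    (hs : ∀ k : Fin n, ∑ j, w (σ k) j = (n : ℝ) - 1 - (k : ℕ)) :
    (graphLaplacian w).charpoly = ∏ k : Fin n, (X - C ((k : ℕ) : ℝ)) := by
  rw [← Matrix.charpoly_reindex σ.symm, Matrix.charpoly_of_isUpperTriangular]
  · rw [← prod_rev (fun x => X - C x)]
    apply Finset.prod_congr rfl
    intro k _
    simp [graphLaplacian, hs, h]
  · intro i j hij
    have hij' : j < i := hij
    have hne : i ≠ j := hij'.ne'
    simp [graphLaplacian, h, hij'.not_gt, Matrix.diagonal_apply, hne]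

theorem order_of_spectral {n : ℕ} (hn : 1 ≤ n) (w : Fin n → Fin n → ℝ)
    (hw0 : ∀ i j, 0 ≤ w i j) (hw1 : ∀ i j, w i j ≤ 1) (hdiag : ∀ i, w i i = 0)
    (hc : (graphLaplacian w).charpoly = ∏ k : Fin n, (X - C ((k : ℕ) : ℝ)))
    (σ : Equiv.Perm (Fin n))
    (hs : ∀ k : Fin n, ∑ j, w (σ k) j = (n : ℝ) - 1 - (k : ℕ)) :
    ∀ i j, w (σ i) (σ j) = if i < j then 1 else 0 := by
  have ht := trace_sq_eq (graphLaplacian w)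
    (Matrix.diagonal fun k : Fin n => ((k : ℕ) : ℝ)) hn (by rw [hc, Matrix.charpoly_diagonal])
  rw [trace_sq_laplacian w hdiag, Matrix.diagonal_pow, Matrix.trace_diagonal] at ht
  have hd : ∑ i, (∑ j, w i j) ^ 2 = ∑ k : Fin n, ((k : ℕ) : ℝ) ^ 2 := by
    rw [← sum_rev (fun x => x ^ 2), ← Equiv.sum_comp σ]
    exact Finset.sum_congr rfl fun k _ => by rw [hs]
  have hz : ∑ i, ∑ j, w i j * w j i = 0 := by
    simp only [Pi.pow_apply] at ht
    linarith
  have hprod : ∀ i j, w i j * w j i = 0 := by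
    intro i j
    rw [Finset.sum_eq_zero_iff_of_nonneg
      (fun i _ => Finset.sum_nonneg fun j _ => mul_nonneg (hw0 _ _) (hw0 _ _))] at hz
    have := hz i (Finset.mem_univ _)
    rw [Finset.sum_eq_zero_iff_of_nonneg (fun j _ => mul_nonneg (hw0 _ _) (hw0 _ _))] at this
    exact this j (Finset.mem_univ _)
  intro i
  induction i using WellFoundedLT.induction with
  | ind i ih =>
    have hle : ∀ j ∈ Finset.univ, w (σ i) (σ j) ≤ if i < j then (1 : ℝ) else 0 := by
      intro j _
      split_ifs with hlt
      · exact hw1 _ _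
      · rcases (not_lt.mp hlt).lt_or_eq with hlt' | e
        · have h1 := ih j hlt' i
          rw [if_pos hlt'] at h1
          have := hprod (σ i) (σ j)
          rw [h1, mul_one] at this
          exact this.le
        · rw [e, hdiag]
    have hsum : ∑ j, w (σ i) (σ j) = ∑ j : Fin n, (if i < j then (1 : ℝ) else 0) := by
      rw [sum_ite_lt, ← hs, Equiv.sum_comp σ (fun j => w (σ i) j)]
    intro j
    exact (Finset.sum_eq_sum_iff_of_le hle).mp hsum j (Finset.mem_univ _)

/-- Spectral-degree characterization of complete dominance graphs: a weighted digraph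
with weights in `[0, 1]` is a complete dominance graph if and only if the eigenvalues of
its Laplacian equal the out-degrees of the vertices and these are `n-1, n-2, …, 1, 0`. -/
theorem completeDominance_iff_spectralDegree (n : ℕ) (hn : 1 ≤ n)
    (w : Fin n → Fin n → ℝ) (hw0 : ∀ i j, 0 ≤ w i j) (hw1 : ∀ i j, w i j ≤ 1)
    (hdiag : ∀ i, w i i = 0) :
    IsCompleteDominanceGraph w ↔
      ((graphLaplacian w).charpoly = ∏ k : Fin n, (X - C ((k : ℕ) : ℝ)) ∧
        ∃ σ : Equiv.Perm (Fin n),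
          ∀ k : Fin n, ∑ j, w (σ k) j = (n : ℝ) - 1 - (k : ℕ)) := by
  constructor
  · intro h
    obtain ⟨σ, hσ⟩ := order_of_dominance w hdiag h
    have hs : ∀ k : Fin n, ∑ j, w (σ k) j = (n : ℝ) - 1 - (k : ℕ) := by
      intro k
      rw [← sum_ite_lt, ← Equiv.sum_comp σ]
      exact Finset.sum_congr rfl fun j _ => hσ k j
    exact ⟨charpoly_of_order w σ hσ hs, σ, hs⟩
  · rintro ⟨hc, σ, hs⟩
    exact dominance_of_order w σ (order_of_spectral hn w hw0 hw1 hdiag hc σ hs)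
end

section
/- Let a weighted digraph on n ≥ 1 vertices have all weights satisfying 0 ≤ w i j ≤ 1, with graph Laplacian L. Then the digraph is a complete dominance graph if and only if there exists a permutation σ : Fin n ≃ Fin n such that for every i : Fin n, the 0/1 vector x_i ∈ ℝⁿ defined by x_i(σ k) = 1 for k ≤ i and x_i(σ k) = 0 for k > i satisfies L *ᵥ x_i = (n − 1 − i) • x_i (x_i is an eigenvector of L for the eigenvalue n − 1 − i). -/
open Matrix Polynomial

theorem lap_row {n : ℕ} (w : Fin n → Fin n → ℝ) (x : Fin n → ℝ) (v : Fin n) :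
    (graphLaplacian w *ᵥ x) v = ∑ j, w v j * (x v - x j) := by
  unfold graphLaplacian
  rw [Matrix.sub_mulVec, Pi.sub_apply, Matrix.mulVec_diagonal]
  simp only [Matrix.mulVec, dotProduct, Matrix.of_apply, mul_sub, Finset.sum_sub_distrib,
    Finset.sum_mul]

theorem card_gt {n : ℕ} (p : Equiv.Perm (Fin n)) (i : Fin n) :
    ∑ j, (if i < p j then (1 : ℝ) else 0) = (n : ℝ) - 1 - (i : ℕ) := by
  rw [Equiv.sum_comp p (fun j => if i < j then (1 : ℝ) else 0), Finset.sum_boole]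
  have h : (Finset.univ.filter (fun j => i < j)) = Finset.Ioi i := by ext; simp
  rw [h, Fin.card_Ioi]
  have := i.2
  rw [Nat.sub_sub, Nat.cast_sub (by omega)]
  push_cast; ring

theorem eig_iff {n : ℕ} (w : Fin n → Fin n → ℝ) (hw0 : ∀ i j, 0 ≤ w i j)
    (hw1 : ∀ i j, w i j ≤ 1) (hdiag : ∀ i, w i i = 0) (p : Equiv.Perm (Fin n)) :
    (∀ i : Fin n,
        graphLaplacian w *ᵥ (fun v => if p v ≤ i then (1 : ℝ) else 0)
          = ((n : ℝ) - 1 - (i : ℕ)) • (fun v => if p v ≤ i then (1 : ℝ) else 0)) ↔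
    ∀ v j, w v j = if p v < p j then 1 else 0 := by
  constructor
  · intro h v j
    split_ifs with hlt
    · have h1 := congrFun (h (p v)) v
      rw [lap_row, Pi.smul_apply] at h1
      simp only [le_refl, if_true, smul_eq_mul, mul_one] at h1
      rw [← card_gt p (p v)] at h1
      have h2 : ∀ k ∈ Finset.univ, w v k * (1 - if p k ≤ p v then (1 : ℝ) else 0)
          ≤ if p v < p k then (1 : ℝ) else 0 := by
        intro k _
        by_cases hk : p k ≤ p v
        · simp [hk, not_lt.mpr hk]
        · simp [hk, not_le.mp hk, hw1]
      have h3 := (Finset.sum_eq_sum_iff_of_le h2).mp h1 j (Finset.mem_univ _)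
      simpa [hlt, not_le.mpr hlt] using h3
    · rcases eq_or_lt_of_le (not_lt.mp hlt) with he | hl
      · rw [p.injective he]; exact hdiag v
      · have h1 := congrFun (h (p j)) v
        rw [lap_row, Pi.smul_apply] at h1
        simp only [not_le.mpr hl, if_false, smul_eq_mul, mul_zero, zero_sub, mul_neg,
          Finset.sum_neg_distrib, neg_eq_zero] at h1
        rw [Finset.sum_eq_zero_iff_of_nonneg] at h1
        · simpa using h1 j (Finset.mem_univ _)
        · intro k _
          exact mul_nonneg (hw0 _ _) (by split_ifs <;> norm_num)
  · intro h i
    funext v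
    rw [lap_row, Pi.smul_apply]
    by_cases hv : p v ≤ i
    · simp only [hv, if_true, smul_eq_mul, mul_one]
      rw [← card_gt p i]
      refine Finset.sum_congr rfl fun k _ => ?_
      rw [h]
      by_cases hk : p k ≤ i
      · simp [hk, not_lt.mpr hk]
      · have hk' := not_le.mp hk
        simp [hk, hk', lt_of_le_of_lt hv hk']
    · simp only [hv, if_false, smul_eq_mul, mul_zero]
      refine Finset.sum_eq_zero fun k _ => ?_
      rw [h]
      by_cases hk : p k ≤ i
      · have : ¬ p v < p k := not_lt.mpr (hk.trans (not_le.mp hv).le)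
        simp [this]
      · simp [hk]

theorem dom_iff {n : ℕ} (w : Fin n → Fin n → ℝ) (hdiag : ∀ i, w i i = 0) :
    IsCompleteDominanceGraph w ↔
      ∃ p : Equiv.Perm (Fin n), ∀ v j, w v j = if p v < p j then 1 else 0 := by
  classical
  constructor
  · rintro ⟨h01, hx, hac⟩
    have htrans : ∀ a b c, w a b = 1 → w b c = 1 → w a c = 1 := by
      intro a b c hab hbc
      by_cases hac' : a = c
      · subst hac'
        have hne : a ≠ b := by
          rintro rfl
          rw [hdiag] at hab; norm_num at hab
        rcases hx a b hne with h | h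
        · exact absurd hbc h.2
        · exact absurd hab h.2
      · rcases hx a c hac' with h | h
        · exact h.1
        · exfalso
          refine hac ⟨3, fun t => if t = 1 then b else if t = 2 then c else a, by norm_num,
            by simp, ?_⟩
          intro t ht
          interval_cases t <;> simp [hab, hbc, h.1]
    let s : Fin n → Finset (Fin n) := fun v => Finset.univ.filter (fun j => w j v = 1)
    have hself : ∀ a, w a a ≠ 1 := fun a => by rw [hdiag]; norm_num
    have hs : ∀ v, (s v).card < n := by
      intro v
      have : (s v).card < (Finset.univ : Finset (Fin n)).card := by
        apply Finset.card_lt_card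
        rw [Finset.ssubset_univ_iff]
        intro h
        have : v ∈ s v := by rw [h]; simp
        exact hself v (by simpa [s] using this)
      simpa using this
    let f : Fin n → Fin n := fun v => ⟨(s v).card, hs v⟩
    have hmono : ∀ a b, w a b = 1 → f a < f b := by
      intro a b hab
      show (s a).card < (s b).card
      apply Finset.card_lt_card
      rw [Finset.ssubset_iff_of_subset]
      · exact ⟨a, by simpa [s] using hab, by simpa [s] using hself a⟩
      · intro c hc
        have hc' : w c a = 1 := by simpa [s] using hc
        simpa [s] using htrans c a b hc' hab
    have hinj : Function.Injective f := by
      intro a b hab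
      by_contra hne
      rcases hx a b hne with h | h
      · exact (hmono a b h.1).ne hab
      · exact (hmono b a h.1).ne hab.symm
    refine ⟨Equiv.ofBijective f (Finite.injective_iff_bijective.mp hinj), ?_⟩
    intro v j
    simp only [Equiv.ofBijective_apply]
    split_ifs with hlt
    · have hne : v ≠ j := by rintro rfl; exact lt_irrefl _ hlt
      rcases hx v j hne with h | h
      · exact h.1
      · exact absurd (hmono j v h.1) (lt_asymm hlt)
    · rcases h01 v j with h | h
      · exact h
      · exact absurd (hmono v j h) hlt
  · rintro ⟨p, hp⟩
    refine ⟨?_, ?_, ?_⟩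
    · intro i j
      rw [hp]; split_ifs <;> simp
    · intro i j hne
      have hne' : p i ≠ p j := fun h => hne (p.injective h)
      rw [hp, hp]
      rcases lt_or_gt_of_ne hne' with h | h
      · left; simp [h, lt_asymm h]
      · right; simp [h, lt_asymm h]
    · rintro ⟨k, x, hk, hx0, hpos⟩
      have hstep : ∀ t < k, p (x t) < p (x (t + 1)) := by
        intro t ht
        have := hpos t ht
        rw [hp] at this
        by_contra hc
        simp [hc] at this
      have hall : ∀ t, 1 ≤ t → t ≤ k → p (x 0) < p (x t) := by
        intro t h1
        induction t, h1 using Nat.le_induction with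
        | base => intro h; exact hstep 0 (by omega)
        | succ m hm ih => intro h; exact (ih (by omega)).trans (hstep m (by omega))
      have := hall k hk le_rfl
      rw [hx0] at this
      exact lt_irrefl _ this

/-- Eigenvector characterization of complete dominance graphs: a weighted digraph with
weights in `[0, 1]` is a complete dominance graph if and only if there is an ordering of
the vertices for which each partial-sum 0/1 vector `x_i` (with ones on the first `i + 1`
vertices of the ordering) is an eigenvector of the Laplacian for the eigenvalue
`n - 1 - i`. -/
theorem completeDominance_iff_eigenvectors (n : ℕ) (hn : 1 ≤ n)
    (w : Fin n → Fin n → ℝ) (hw0 : ∀ i j, 0 ≤ w i j) (hw1 : ∀ i j, w i j ≤ 1)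
    (hdiag : ∀ i, w i i = 0) :
    IsCompleteDominanceGraph w ↔
      ∃ σ : Equiv.Perm (Fin n), ∀ i : Fin n,
        graphLaplacian w *ᵥ (fun v => if σ.symm v ≤ i then (1 : ℝ) else 0)
          = ((n : ℝ) - 1 - (i : ℕ)) • (fun v => if σ.symm v ≤ i then (1 : ℝ) else 0) := by
  rw [dom_iff w hdiag]
  constructor
  · rintro ⟨p, hp⟩
    refine ⟨p.symm, ?_⟩
    exact (eig_iff w hw0 hw1 hdiag p).mpr hp
  · rintro ⟨σ, hσ⟩
    exact ⟨σ.symm, (eig_iff w hw0 hw1 hdiag σ.symm).mp hσ⟩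
end

section
/- Let V be the n×n real matrix whose (k, i) entry is 1 if k ≤ i and 0 otherwise (the i-th column of V is v_i = e₀ + ⋯ + e_i). Then: (a) V is invertible and V⁻¹ is the upper bidiagonal matrix with (V⁻¹) i i = 1 for all i, (V⁻¹) i (i+1) = −1 for i < n − 1, and all other entries 0; and (b) for every complete dominance graph on n vertices with graph Laplacian L, there exists a permutation σ : Fin n ≃ Fin n such that for every i : Fin n, the i-th row u_i of V⁻¹ is a left eigenvector of the permuted Laplacian M, where M k l = L (σ k) (σ l), for the eigenvalue n − 1 − i: u_i ᵥ* M = (n − 1 − i) • u_i. -/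
open Matrix Polynomial

/-- The matrix whose `i`-th column is `v_i = e₀ + ⋯ + e_i`. -/
def eigvecMatrix (n : ℕ) : Matrix (Fin n) (Fin n) ℝ :=
  Matrix.of fun k i => if k ≤ i then (1 : ℝ) else 0

/-- The upper bidiagonal matrix with `1`s on the diagonal and `-1`s on the
superdiagonal; it is the inverse of `eigvecMatrix n`. -/
def eigvecMatrixInv (n : ℕ) : Matrix (Fin n) (Fin n) ℝ :=
  Matrix.of fun i j => if j = i then (1 : ℝ) else if (j : ℕ) = (i : ℕ) + 1 then -1 else 0

theorem eigInv_sum (n : ℕ) (i : Fin n) (g : Fin n → ℝ) :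
    ∑ j, eigvecMatrixInv n i j * g j
      = g i - (if h : (i : ℕ) + 1 < n then g ⟨(i : ℕ) + 1, h⟩ else 0) := by
  have h1 : ∀ j, eigvecMatrixInv n i j * g j
      = (if j = i then g j else 0) - (if (j : ℕ) = (i : ℕ) + 1 then g j else 0) := by
    intro j
    simp only [eigvecMatrixInv, Matrix.of_apply]
    by_cases h : j = i
    · subst h; simp
    · by_cases h' : (j : ℕ) = (i : ℕ) + 1 <;> simp [h, h']
  rw [Finset.sum_congr rfl (fun j _ => h1 j), Finset.sum_sub_distrib]
  congr 1
  · simp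
  · split_ifs with h
    · have : ∀ j : Fin n, ((j : ℕ) = (i : ℕ) + 1) ↔ j = ⟨(i : ℕ) + 1, h⟩ := by
        intro j; rw [Fin.ext_iff]
      simp [this]
    · apply Finset.sum_eq_zero
      intro j _
      rw [if_neg]
      have := j.2
      omega

theorem eigInv_mul (n : ℕ) : eigvecMatrixInv n * eigvecMatrix n = 1 := by
  ext i l
  rw [Matrix.mul_apply, eigInv_sum n i (fun j => eigvecMatrix n j l), Matrix.one_apply]
  simp only [eigvecMatrix, Matrix.of_apply, Fin.le_def, Fin.ext_iff]
  have := l.2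
  split_ifs <;> first | omega | norm_num

theorem exists_sorting {n : ℕ} (w : Fin n → Fin n → ℝ) (hdiag : ∀ i, w i i = 0)
    (hdom : IsCompleteDominanceGraph w) :
    ∃ σ : Equiv.Perm (Fin n), ∀ k l, w (σ k) (σ l) = if k < l then 1 else 0 := by
  classical
  obtain ⟨h01, hx, hac⟩ := hdom
  have hirr : ∀ i, w i i ≠ 1 := by intro i; simp [hdiag]
  have hasymm : ∀ i j, w i j = 1 → w j i ≠ 1 := by
    intro i j h h'
    have hne : i ≠ j := by rintro rfl; exact hirr _ h
    rcases hx i j hne with h2 | h2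
    · exact h2.2 h'
    · exact h2.2 h
  have htrans : ∀ i j k, w i j = 1 → w j k = 1 → w i k = 1 := by
    intro i j k h1 h2
    by_contra h3
    have hne : i ≠ k := by rintro rfl; exact hasymm _ _ h1 h2
    have h4 : w k i = 1 := by
      rcases hx i k hne with h | h
      · exact absurd h.1 h3
      · exact h.1
    apply hac
    refine ⟨3, fun t => if t = 0 then i else if t = 1 then j else if t = 2 then k else i,
      by norm_num, by norm_num, ?_⟩
    intro t ht
    interval_cases t <;> simp [h1, h2, h4]
  let F : Fin n → ℕ := fun i => (Finset.univ.filter (fun j => w j i = 1)).card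
  have hF : ∀ i, F i < n := by
    intro i
    have : (Finset.univ.filter (fun j => w j i = 1)).card < (Finset.univ : Finset (Fin n)).card := by
      apply Finset.card_lt_card
      rw [Finset.filter_ssubset]
      exact ⟨i, Finset.mem_univ _, hirr i⟩
    simpa [F] using this
  have hlt : ∀ i j, w i j = 1 → F i < F j := by
    intro i j h
    apply Finset.card_lt_card
    rw [Finset.ssubset_iff_of_subset]
    · exact ⟨i, by simpa using h, by simpa using hirr i⟩
    · intro k hk
      simp only [Finset.mem_filter, Finset.mem_univ, true_and] at hk ⊢
      exact htrans _ _ _ hk h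
  have htot : ∀ i j, i ≠ j → w i j = 1 ∨ w j i = 1 := by
    intro i j hne
    rcases hx i j hne with h | h
    · exact Or.inl h.1
    · exact Or.inr h.1
  let f : Fin n → Fin n := fun i => ⟨F i, hF i⟩
  have hinj : Function.Injective f := by
    intro i j h
    by_contra hne
    have h' : F i = F j := congrArg Fin.val h
    rcases htot i j hne with h2 | h2
    · have := hlt _ _ h2; omega
    · have := hlt _ _ h2; omega
  let e : Equiv.Perm (Fin n) := Equiv.ofBijective f (Finite.injective_iff_bijective.mp hinj)
  have key : ∀ i j, w i j = if e i < e j then 1 else 0 := by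
    intro i j
    have he : e i < e j ↔ F i < F j := Iff.rfl
    simp only [he]
    split_ifs with h
    · have hne : i ≠ j := by rintro rfl; omega
      rcases htot i j hne with h2 | h2
      · exact h2
      · have := hlt _ _ h2; omega
    · rcases h01 i j with h2 | h2
      · exact h2
      · exact absurd (hlt _ _ h2) h
  refine ⟨e.symm, fun k l => ?_⟩
  rw [key]; simp

theorem lap_perm {n : ℕ} (w : Fin n → Fin n → ℝ) (σ : Equiv.Perm (Fin n))
    (hσ : ∀ k l, w (σ k) (σ l) = if k < l then 1 else 0) (k l : Fin n) :
    graphLaplacian w (σ k) (σ l)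
      = (if (k : ℕ) = l then (n : ℝ) - 1 - (k : ℕ) else 0)
        - (if (k : ℕ) < l then 1 else 0) := by
  have hs : ∑ j, w (σ k) j = (n : ℝ) - 1 - (k : ℕ) := by
    rw [← Equiv.sum_comp σ]
    simp only [hσ]
    rw [Finset.sum_boole]
    have h1 : (Finset.univ.filter (fun x => k < x)) = Finset.Ioi k := by ext; simp
    rw [h1, Fin.card_Ioi]
    have := k.2
    rw [Nat.cast_sub (by omega), Nat.cast_sub (by omega)]
    simp
  simp only [graphLaplacian, Matrix.sub_apply, Matrix.diagonal_apply, Matrix.of_apply, hs, hσ,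
    EmbeddingLike.apply_eq_iff_eq, Fin.ext_iff, Fin.lt_def]

/-- (a) The matrix `V` of partial-sum columns is invertible with the explicit upper
bidiagonal inverse, and (b) for every complete dominance graph the rows of `V⁻¹` are left
eigenvectors of a suitably permuted Laplacian, the `i`-th row for the eigenvalue
`n - 1 - i`. -/
theorem eigvecMatrix_inverse_and_left_eigenvectors (n : ℕ) (hn : 1 ≤ n)
    (w : Fin n → Fin n → ℝ) (hw0 : ∀ i j, 0 ≤ w i j) (hdiag : ∀ i, w i i = 0)
    (hdom : IsCompleteDominanceGraph w) :
    (IsUnit (eigvecMatrix n) ∧ (eigvecMatrix n)⁻¹ = eigvecMatrixInv n) ∧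
    ∃ σ : Equiv.Perm (Fin n), ∀ i : Fin n,
      (fun j => eigvecMatrixInv n i j) ᵥ*
          (Matrix.of fun k l => graphLaplacian w (σ k) (σ l))
        = ((n : ℝ) - 1 - (i : ℕ)) • (fun j => eigvecMatrixInv n i j) := by
  refine ⟨⟨?_, Matrix.inv_eq_left_inv (eigInv_mul n)⟩, ?_⟩
  · exact IsUnit.of_mul_eq_one_right _ (eigInv_mul n)
  · obtain ⟨σ, hσ⟩ := exists_sorting w hdiag hdom
    refine ⟨σ, fun i => ?_⟩
    ext l
    simp only [Matrix.vecMul, dotProduct, Matrix.of_apply, Pi.smul_apply, smul_eq_mul]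
    rw [eigInv_sum n i (fun j => graphLaplacian w (σ j) (σ l))]
    simp only [lap_perm w σ hσ, eigvecMatrixInv, Matrix.of_apply, Fin.ext_iff]
    have := l.2
    split_ifs <;> first | omega | (push_cast; ring)
end

section
/- Let L be the standard dominance Laplacian on n vertices and let i : Fin n with i + 1 < n. Define the unit vectors v̂_i = (1/√(i+1)) · ∑_{k ≤ i} e_k and ŵ_i = (1/√2) · (e_i − e_{i+1}) in ℝⁿ. Then v̂_i is a right eigenvector and ŵ_i a left eigenvector of L for the eigenvalue n − 1 − i (i.e., L *ᵥ v̂_i = (n−1−i) • v̂_i and ŵ_i ᵥ* L = (n−1−i) • ŵ_i), both have Euclidean norm 1, and the eigenvalue condition number κ = 1/|⟨ŵ_i, v̂_i⟩| satisfies κ = √(2(i+1)). -/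
open Matrix Polynomial

/-- The standard dominance Laplacian on `n` vertices: the graph Laplacian of the complete
dominance graph with the vertices in their natural order. -/
def stdDomLaplacian (n : ℕ) : Matrix (Fin n) (Fin n) ℝ :=
  Matrix.of fun i j =>
    if i = j then (n : ℝ) - 1 - (i : ℕ) else if i < j then -1 else 0

/-- For the standard dominance Laplacian, the unit vectors
`v̂_i = (1/√(i+1)) ∑_{k ≤ i} e_k` and `ŵ_i = (1/√2)(e_i − e_{i+1})` are right and left
eigenvectors for the eigenvalue `n − 1 − i`, both have Euclidean norm 1, and the
condition number `κ = 1/|⟨ŵ_i, v̂_i⟩|` equals `√(2(i+1))`. -/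
theorem stdDomLaplacian_eigenvectors_and_condition_number (n : ℕ) (i : Fin n)
    (hi : (i : ℕ) + 1 < n) (v u : Fin n → ℝ)
    (hv : v = fun k => if k ≤ i then 1 / Real.sqrt ((i : ℕ) + 1) else 0)
    (hu : u = fun k =>
      (1 / Real.sqrt 2) * (if k = i then 1 else if (k : ℕ) = (i : ℕ) + 1 then -1 else 0)) :
    stdDomLaplacian n *ᵥ v = ((n : ℝ) - 1 - (i : ℕ)) • v ∧
    u ᵥ* stdDomLaplacian n = ((n : ℝ) - 1 - (i : ℕ)) • u ∧
    Real.sqrt (∑ k, v k ^ 2) = 1 ∧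
    Real.sqrt (∑ k, u k ^ 2) = 1 ∧
    1 / |∑ k, u k * v k| = Real.sqrt (2 * ((i : ℕ) + 1)) := by
  have key : ∀ f : Fin n → ℝ, ∑ k, u k * f k = (1 / Real.sqrt 2) * (f i - f ⟨i + 1, hi⟩) := by
    intro f
    have h1 : ∀ k, u k * f k = (1 / Real.sqrt 2) *
        ((if k = i then f k else 0) - (if k = ⟨i + 1, hi⟩ then f k else 0)) := by
      intro k
      rw [hu]
      simp only [Fin.ext_iff]
      by_cases h : (k : ℕ) = i
      · simp [h]
      · by_cases h' : (k : ℕ) = i + 1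
        · simp [h']
        · simp [h, h']
    rw [Finset.sum_congr rfl fun k _ => h1 k, ← Finset.mul_sum, Finset.sum_sub_distrib]
    simp
  have hs2 : Real.sqrt 2 ≠ 0 := by positivity
  have hs2' : Real.sqrt 2 ^ 2 = 2 := Real.sq_sqrt (by norm_num)
  have hpos : (0 : ℝ) < (i : ℕ) + 1 := by positivity
  have hsi : 0 < Real.sqrt ((i : ℕ) + 1) := Real.sqrt_pos.mpr hpos
  have hsi' : Real.sqrt ((i : ℕ) + 1) ^ 2 = (i : ℕ) + 1 := Real.sq_sqrt hpos.le
  refine ⟨?_, ?_, ?_, ?_, ?_⟩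
  · funext j
    simp only [Matrix.mulVec, dotProduct, Pi.smul_apply, smul_eq_mul]
    have h1 : ∀ k, stdDomLaplacian n j k * v k =
        (if j = k then ((n : ℝ) - 1 - (j : ℕ)) * v k else 0) -
        (if k ∈ Finset.Ioc j i then 1 / Real.sqrt ((i : ℕ) + 1) else 0) := by
      intro k
      rw [hv]
      simp only [stdDomLaplacian, Matrix.of_apply, Finset.mem_Ioc]
      by_cases h : j = k
      · subst h; simp
      · by_cases h' : j < k
        · by_cases h'' : k ≤ i <;> simp [h, h', h'']
        · simp [h, h']
    rw [Finset.sum_congr rfl fun k _ => h1 k, Finset.sum_sub_distrib]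
    simp only [Finset.sum_ite_eq, Finset.mem_univ, if_true, Finset.sum_ite_mem,
      Finset.univ_inter, Finset.sum_const, Fin.card_Ioc, nsmul_eq_mul]
    rw [hv]
    by_cases h : j ≤ i
    · simp only [h, if_true]
      rw [Nat.cast_sub (Fin.le_def.mp h)]
      ring
    · have h' : (i : ℕ) - (j : ℕ) = 0 := by
        have := Fin.lt_def.mp (not_le.mp h)
        omega
      simp [h, h']
  · funext j
    simp only [Matrix.vecMul, dotProduct, Pi.smul_apply, smul_eq_mul]
    rw [key, hu]
    simp only [stdDomLaplacian, Matrix.of_apply, Fin.ext_iff, Fin.lt_def]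
    rcases lt_trichotomy (j : ℕ) i with h | h | h
    · have a1 : ¬ (i : ℕ) = j := by omega
      have a2 : ¬ (i : ℕ) < j := by omega
      have a3 : ¬ (i : ℕ) + 1 = j := by omega
      have a4 : ¬ (i : ℕ) + 1 < j := by omega
      have a5 : ¬ (j : ℕ) = i := by omega
      have a6 : ¬ (j : ℕ) = i + 1 := by omega
      simp only [a1, a2, a3, a4, a5, a6, if_false]
      ring
    · simp [h]
      ring
    · have a1 : ¬ (i : ℕ) = j := by omega
      have a5 : ¬ (j : ℕ) = i := by omega
      by_cases h' : (j : ℕ) = i + 1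
      · simp [h']
        ring
      · have a3 : ¬ (i : ℕ) + 1 = j := by omega
        have a4 : (i : ℕ) + 1 < j := by omega
        simp only [a1, h, a3, a4, a5, h', if_false, if_true]
        ring
  · have h1 : ∀ k, v k ^ 2 = if k ∈ Finset.Iic i then 1 / ((i : ℕ) + 1 : ℝ) else 0 := by
      intro k
      rw [hv]
      by_cases h : k ≤ i
      · simp only [h, if_true, Finset.mem_Iic, div_pow, hsi', one_pow]
      · simp [h]
    rw [Finset.sum_congr rfl fun k _ => h1 k]
    simp only [Finset.sum_ite_mem, Finset.univ_inter, Finset.sum_const, Fin.card_Iic,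
      nsmul_eq_mul]
    push_cast
    rw [mul_one_div_cancel hpos.ne', Real.sqrt_one]
  · simp only [pow_two]
    rw [key, hu]
    simp only [Fin.ext_iff]
    have : (1 / Real.sqrt 2) * (1 / Real.sqrt 2) = 1 / 2 := by
      rw [← pow_two, div_pow, hs2', one_pow]
    simp only [if_true, Nat.add_eq_left, one_ne_zero, if_false]
    rw [← mul_sub, ← mul_assoc, this]
    norm_num
  · rw [key, hv]
    have h : ¬ (⟨i + 1, hi⟩ : Fin n) ≤ i := by
      rw [Fin.le_def]; simp
    simp only [h, le_refl, if_true, if_false, sub_zero]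
    rw [abs_of_pos (by positivity), Real.sqrt_mul (by norm_num)]
    field_simp
end

section
/- Let A be an n×n complex matrix and λ : Fin n → ℂ with charpoly(A) = ∏_{j} (X − C(λ j)). Let 1 ≤ k ≤ n and let w₁, …, w_k ∈ ℂⁿ be left eigenvectors of A for λ₁, …, λ_k respectively (star(w_j) ᵥ* A = λ_j • star(w_j) for j = 1, …, k). Let x ∈ ℂⁿ be perpendicular to w₂, …, w_k, i.e., ⟨w_j, x⟩ = 0 for j = 2, …, k, where ⟨w, x⟩ = ∑_i conj(w_i) x_i. Then the characteristic polynomial of the rank-one update A + B, where B is the matrix with entries B p q = x_p · conj((w₁ + ⋯ + w_k)_q), equals (X − C(λ₁ + ⟨w₁, x⟩)) · ∏_{j=2}^{n} (X − C(λ_j)). -/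
open Matrix Polynomial

/-- Rank-one update of the spectrum (extension of Ding–Zhou): if `w₁, …, w_k` are left
eigenvectors of `A` for the eigenvalues `λ₁, …, λ_k` and `x` is perpendicular to
`w₂, …, w_k`, then the rank-one update `A + x (w₁ + ⋯ + w_k)*` has the same eigenvalues
as `A`, except that `λ₁` is replaced by `λ₁ + ⟨w₁, x⟩`. -/
theorem charpoly_rankOne_update (n : ℕ) (hn : 1 ≤ n)
    (A : Matrix (Fin n) (Fin n) ℂ) (lam : Fin n → ℂ)
    (hA : A.charpoly = ∏ j, (X - C (lam j)))
    (k : ℕ) (hk : 1 ≤ k) (hkn : k ≤ n)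
    (w : Fin k → Fin n → ℂ)
    (hw : ∀ j : Fin k, star (w j) ᵥ* A = lam (Fin.castLE hkn j) • star (w j))
    (x : Fin n → ℂ)
    (hx : ∀ j : Fin k, 0 < (j : ℕ) → ∑ i, (starRingEnd ℂ) (w j i) * x i = 0) :
    (A + Matrix.of fun p q => x p * (starRingEnd ℂ) ((∑ j, w j) q)).charpoly
      = (X - C (lam ⟨0, hn⟩ + ∑ i, (starRingEnd ℂ) (w ⟨0, hk⟩ i) * x i)) *
        ∏ j ∈ Finset.univ.erase (⟨0, hn⟩ : Fin n), (X - C (lam j)) := by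
  classical
  apply Polynomial.eq_of_infinite_eval_eq
  have hfin : (Set.range lam).Finite := Set.finite_range lam
  refine hfin.infinite_compl.mono ?_
  intro z hz
  have hz' : ∀ j, z - lam j ≠ 0 := fun j h => hz ⟨j, (sub_eq_zero.mp h).symm⟩
  have hdet : (Matrix.scalar (Fin n) z - A).det = ∏ j, (z - lam j) := by
    rw [← Matrix.eval_charpoly, hA, Polynomial.eval_prod]
    simp
  set M := Matrix.scalar (Fin n) z - A with hM
  have hwM : ∀ j : Fin k, star (w j) ᵥ* M = (z - lam (Fin.castLE hkn j)) • star (w j) := by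
    intro j
    rw [hM, Matrix.vecMul_sub, hw, sub_smul]
    congr 1
    ext i
    simp [Matrix.vecMul_diagonal, mul_comm]
  let v : Fin n → ℂ := ∑ j : Fin k, (z - lam (Fin.castLE hkn j))⁻¹ • star (w j)
  have hv : v ᵥ* M = star (∑ j, w j) := by
    simp only [v, Matrix.sum_vecMul, Matrix.smul_vecMul, hwM, smul_smul,
      inv_mul_cancel₀ (hz' _), one_smul, star_sum]
  have hvx : v ⬝ᵥ x = (z - lam ⟨0, hn⟩)⁻¹ * ∑ i, (starRingEnd ℂ) (w ⟨0, hk⟩ i) * x i := by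
    simp only [v, sum_dotProduct, smul_dotProduct, smul_eq_mul]
    rw [Finset.sum_eq_single (⟨0, hk⟩ : Fin k)]
    · rfl
    · intro j _ hj
      have h0 : 0 < (j : ℕ) := Nat.pos_of_ne_zero fun h => hj (Fin.ext h)
      have := hx j h0
      have h2 : star (w j) ⬝ᵥ x = 0 := this
      rw [h2, mul_zero]
    · simp
  have hfac : Matrix.scalar (Fin n) z -
      (A + Matrix.of fun p q => x p * (starRingEnd ℂ) ((∑ j, w j) q))
      = (1 + replicateCol Unit (-x) * replicateRow Unit v) * M := by
    have h1 : (Matrix.of fun p q => x p * (starRingEnd ℂ) ((∑ j, w j) q))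
        = Matrix.vecMulVec x (v ᵥ* M) := by
      rw [hv]; rfl
    rw [h1, ← sub_sub, ← hM, add_mul, one_mul, ← Matrix.vecMulVec_eq, Matrix.vecMulVec_mul,
      Matrix.neg_vecMulVec, sub_eq_add_neg]
  show eval z _ = eval z _
  rw [Matrix.eval_charpoly, hfac, Matrix.det_mul, Matrix.det_one_add_replicateCol_mul_replicateRow,
    dotProduct_neg, hvx, hdet, Polynomial.eval_mul, Polynomial.eval_prod,
    ← Finset.mul_prod_erase Finset.univ _ (Finset.mem_univ (⟨0, hn⟩ : Fin n)), ← mul_assoc]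
  simp only [eval_sub, eval_X, eval_C]
  congr 1
  have := hz' ⟨0, hn⟩
  field_simp
  ring
end
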